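/- arXiv:1110.6884 — 8 statements merged into one kernel-verified Lean document; each statement's English description precedes it below -/
import Mathlib

section
/- The formal power series identity (1 − Σ_{n≥1} B_{n-1} x^n) · (1 + Σ_{n≥1} b_n x^n) = 1 holds, where b_n is the number of permutations of [n] avoiding the barred pattern 2̄4135̄ and B_m is the m-th Bell number. -/
/-!
The identity is the recurrence `b_{n+1} = ∑_{a+b=n} B_a b_b`, proved in two steps.

*Last entry.* In a `2̄4135̄`-avoiding permutation `π` of `[a + b + 1]` whose last entry is the one
with exactly `a` smaller values, no `413`-pattern can end in the last position (there is no room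
for the `5`), so all entries smaller than the last one precede all larger entries. Hence `π` is
`α ⊕ β` with the last entry appended, where `α` permutes `a` letters and `β` permutes `b` letters.
For `α` the last entry always serves as the `5`, so `α` only has to avoid `2̄413`, whereas `β` has
to avoid `2̄4135̄`. This gives `b_{n+1} = ∑_{a+b=n} A_a b_b`, with `A_a` the number of
`2̄413`-avoiders (`avoidCount_succ`).

*Bell numbers.* For a permutation `π` let `firstGe π i` be the first position whose entry is at
least `π i`. This map is deflationary and idempotent, and such maps are exactly the block-minimum
maps of set partitions of the positions. A permutation avoids `2̄413` iff it is decreasing on the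
fibres of `firstGe π` (`avoids2413_iff`); as `firstGe π` is monotone in the value of the entry, such
a `π` is recovered from `firstGe π` by sorting the positions `i` by `firstGe π i` and, within a
fibre, decreasingly. Hence `A_a = B_a` (`card_avoids2413`).
-/

/-- A permutation of [n] avoids the barred pattern 2̄4135̄: every 413-pattern
(positions i<j<k with π j < π k < π i) extends to a 24135-pattern. -/
def Avoids24135 {n : ℕ} (π : Equiv.Perm (Fin n)) : Prop :=
  ∀ i j k : Fin n, i < j → j < k → π j < π k → π k < π i →
    ∃ h l : Fin n, h < i ∧ k < l ∧ π j < π h ∧ π h < π k ∧ π i < π l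

/-- A permutation of [n] avoids the barred pattern 2̄413: every 413-pattern
extends to a 2413-pattern. -/
def Avoids2413 {n : ℕ} (π : Equiv.Perm (Fin n)) : Prop :=
  ∀ i j k : Fin n, i < j → j < k → π j < π k → π k < π i →
    ∃ h : Fin n, h < i ∧ π j < π h ∧ π h < π k

/-- The Bell number `bell m`: the number of set partitions of an m-element set. -/
noncomputable def bell (m : ℕ) : ℕ := Nat.card (Finpartition (Finset.univ : Finset (Fin m)))

/-- The number of 2̄4135̄-avoiding permutations of [n]. -/
noncomputable def avoidCount (n : ℕ) : ℕ := Nat.card {π : Equiv.Perm (Fin n) // Avoids24135 π}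

namespace Barred

/-! ### `2̄413`-avoiders and set partitions -/

/-- The deflationary idempotent self-maps of `Fin n`: the maps sending each element to the minimum
of its block, for some set partition of `Fin n`. -/
abbrev BlockMin (n : ℕ) : Type := {m : Fin n → Fin n // ∀ i, m i ≤ i ∧ m (m i) = m i}

lemma exists_ge {n : ℕ} (π : Equiv.Perm (Fin n)) (i : Fin n) :
    (Finset.univ.filter (fun p => π i ≤ π p)).Nonempty :=
  ⟨i, by simp⟩

/-- The first position whose entry is at least the entry in position `i`. -/
def firstGe {n : ℕ} (π : Equiv.Perm (Fin n)) (i : Fin n) : Fin n :=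
  (Finset.univ.filter (fun p => π i ≤ π p)).min' (exists_ge π i)

lemma firstGe_spec {n : ℕ} (π : Equiv.Perm (Fin n)) (i : Fin n) : π i ≤ π (firstGe π i) := by
  exact (Finset.mem_filter.1 (Finset.min'_mem _ (exists_ge π i))).2

lemma firstGe_le {n : ℕ} (π : Equiv.Perm (Fin n)) {i p : Fin n} (h : π i ≤ π p) :
    firstGe π i ≤ p :=
  Finset.min'_le _ _ (by simpa using h)

lemma firstGe_mono {n : ℕ} (π : Equiv.Perm (Fin n)) {i j : Fin n} (h : π i ≤ π j) :
    firstGe π i ≤ firstGe π j :=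
  firstGe_le π (h.trans (firstGe_spec π j))

lemma firstGe_idem {n : ℕ} (π : Equiv.Perm (Fin n)) (i : Fin n) :
    firstGe π (firstGe π i) = firstGe π i :=
  le_antisymm (firstGe_le π le_rfl) (firstGe_mono π (firstGe_spec π i))

lemma avoids2413_iff {n : ℕ} (π : Equiv.Perm (Fin n)) :
    Avoids2413 π ↔ ∀ i j, firstGe π i = firstGe π j → i < j → π j < π i := by
  constructor
  · intro H i j hm hij
    by_contra hlt
    have hlt' : π i < π j :=
      lt_of_le_of_ne (not_lt.1 hlt) (fun h => hij.ne (π.injective h))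
    have hp := firstGe_spec π j
    rw [← hm] at hp
    have hpi : firstGe π i < i :=
      lt_of_le_of_ne (firstGe_le π le_rfl) (fun h => by rw [h] at hp; exact hlt'.not_ge hp)
    have hpj : π j < π (firstGe π i) :=
      lt_of_le_of_ne hp (fun h => (hpi.trans hij).ne' (π.injective h))
    -- `firstGe π i < i < j` is a `413`-pattern, and no earlier entry exceeds `π i`.
    obtain ⟨h, h1, h2, -⟩ := H _ i j hpi hij hlt' hpj
    exact (firstGe_le π h2.le).not_gt h1
  · intro H i j k hij hjk h1 h2
    by_contra hno
    push Not at hno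
    have hji : firstGe π j ≤ i := firstGe_le π (h1.trans h2).le
    have hm : firstGe π j = firstGe π k := by
      refine le_antisymm (firstGe_mono π h1.le) ?_
      rcases hji.lt_or_eq with h | h
      · refine firstGe_le π (hno _ h (lt_of_le_of_ne (firstGe_spec π j) fun e => ?_))
        have := π.injective e
        rw [← this] at h
        exact absurd h hij.not_gt
      · rw [h]; exact firstGe_le π h2.le
    exact (H j k hm hjk).not_gt h1

lemma lt_iff_of_avoids {n : ℕ} {π : Equiv.Perm (Fin n)} (H : Avoids2413 π) (i j : Fin n) :
    π i < π j ↔ firstGe π i < firstGe π j ∨ (firstGe π i = firstGe π j ∧ j < i) := by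
  rw [avoids2413_iff] at H
  constructor
  · intro h
    rcases (firstGe_mono π h.le).lt_or_eq with h' | h'
    · exact Or.inl h'
    · refine Or.inr ⟨h', ?_⟩
      by_contra hc
      rcases (not_lt.1 hc).lt_or_eq with hc | hc
      · exact (H i j h' hc).not_gt h
      · exact h.ne (congrArg π hc)
  · rintro (h | ⟨h, hlt⟩)
    · by_contra hc
      exact (firstGe_mono π (not_lt.1 hc)).not_gt h
    · exact H j i h.symm hlt

lemma perm_eq_of_lt_iff {n : ℕ} {π σ : Equiv.Perm (Fin n)}
    (h : ∀ i j, π i < π j ↔ σ i < σ j) : π = σ := by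
  have hm : StrictMono (fun x => σ (π.symm x)) := fun x y hxy => by
    rw [← h]; simpa using hxy
  have hid := Subsingleton.elim
    (StrictMono.orderIsoOfSurjective _ hm (σ.surjective.comp π.symm.surjective))
    (OrderIso.refl (Fin n))
  ext1 i
  have := DFunLike.congr_fun hid (π i)
  simpa using this.symm

/-- Sorting along an injective key. -/
lemma exists_perm_lt_iff {n : ℕ} {β : Type*} [LinearOrder β] (f : Fin n → β)
    (hf : Function.Injective f) : ∃ π : Equiv.Perm (Fin n), ∀ i j, π i < π j ↔ f i < f j := by
  have hs : StrictMono (f ∘ Tuple.sort f) :=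
    (Tuple.monotone_sort f).strictMono_of_injective (hf.comp (Tuple.sort f).injective)
  refine ⟨(Tuple.sort f)⁻¹, fun i j => ?_⟩
  rw [← hs.lt_iff_lt]
  simp

lemma exists_perm_of_blockMin {n : ℕ} (m : BlockMin n) :
    ∃ π : Equiv.Perm (Fin n), Avoids2413 π ∧ firstGe π = m.1 := by
  obtain ⟨m, hm⟩ := m
  obtain ⟨π, hπ⟩ := exists_perm_lt_iff (fun i => toLex (m i, OrderDual.toDual i))
    (fun i j h => by simpa using congrArg (fun x => (ofLex x).2) h)
  simp only [Prod.Lex.toLex_lt_toLex, OrderDual.toDual_lt_toDual] at hπ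
  have hfg : firstGe π = m := by
    funext i
    apply le_antisymm
    · apply firstGe_le
      rw [← not_lt, hπ, (hm i).2]
      simpa using (hm i).1
    · by_contra hc
      have h1 : m (firstGe π i) < m i := (hm _).1.trans_lt (not_le.1 hc)
      exact (firstGe_spec π i).not_gt ((hπ _ _).2 (Or.inl h1))
  refine ⟨π, ?_, hfg⟩
  rw [avoids2413_iff, hfg]
  intro i j h hij
  exact (hπ j i).2 (Or.inr ⟨h.symm, hij⟩)

lemma card_avoids_eq_blockMin (n : ℕ) :
    Nat.card {π : Equiv.Perm (Fin n) // Avoids2413 π} = Nat.card (BlockMin n) := by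
  refine Nat.card_congr (Equiv.ofBijective
    (fun π => ⟨firstGe π.1, fun i => ⟨firstGe_le _ le_rfl, firstGe_idem _ i⟩⟩) ⟨?_, ?_⟩)
  · intro π σ h
    have h' : firstGe π.1 = firstGe σ.1 := congrArg Subtype.val h
    apply Subtype.ext
    apply perm_eq_of_lt_iff
    intro i j
    rw [lt_iff_of_avoids π.2, lt_iff_of_avoids σ.2, h']
  · intro m
    obtain ⟨π, h1, h2⟩ := exists_perm_of_blockMin m
    exact ⟨⟨π, h1⟩, Subtype.ext h2⟩

lemma part_nonempty {n : ℕ} (P : Finpartition (Finset.univ : Finset (Fin n))) (i : Fin n) :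
    (P.part i).Nonempty :=
  ⟨i, P.mem_part (Finset.mem_univ i)⟩

/-- The minimum of the block of `i` in the partition `P`. -/
def partMin {n : ℕ} (P : Finpartition (Finset.univ : Finset (Fin n))) (i : Fin n) : Fin n :=
  (P.part i).min' (part_nonempty P i)

lemma partMin_mem {n : ℕ} (P : Finpartition (Finset.univ : Finset (Fin n))) (i : Fin n) :
    partMin P i ∈ P.part i :=
  Finset.min'_mem _ _

lemma part_partMin {n : ℕ} (P : Finpartition (Finset.univ : Finset (Fin n))) (i : Fin n) :
    P.part (partMin P i) = P.part i :=
  P.part_eq_of_mem (P.part_mem.2 (Finset.mem_univ i)) (partMin_mem P i)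

lemma partMin_eq_iff {n : ℕ} (P : Finpartition (Finset.univ : Finset (Fin n))) (i j : Fin n) :
    partMin P i = partMin P j ↔ j ∈ P.part i := by
  constructor
  · intro h
    have := part_partMin P i
    rw [h, part_partMin P j] at this
    rw [← this]
    exact P.mem_part (Finset.mem_univ j)
  · intro h
    have := P.part_eq_of_mem (P.part_mem.2 (Finset.mem_univ i)) h
    simp only [partMin, this]

lemma bell_eq_blockMin (n : ℕ) : bell n = Nat.card (BlockMin n) := by
  classical
  refine Nat.card_congr (Equiv.ofBijective (fun P => ⟨partMin P, fun i =>
    ⟨Finset.min'_le _ _ (P.mem_part (Finset.mem_univ i)),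
      ((partMin_eq_iff P _ _).2 (partMin_mem P i)).symm⟩⟩) ⟨?_, ?_⟩)
  · intro P Q h
    have h' : partMin P = partMin Q := congrArg Subtype.val h
    have hp : ∀ i, P.part i = Q.part i := fun i => by
      ext j
      rw [← partMin_eq_iff, ← partMin_eq_iff, h']
    ext s
    constructor
    · intro hs
      obtain ⟨i, hi⟩ := P.nonempty_of_mem_parts hs
      rw [← P.part_eq_of_mem hs hi, hp]
      exact Q.part_mem.2 (Finset.mem_univ i)
    · intro hs
      obtain ⟨i, hi⟩ := Q.nonempty_of_mem_parts hs
      rw [← Q.part_eq_of_mem hs hi, ← hp]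
      exact P.part_mem.2 (Finset.mem_univ i)
  · rintro ⟨m, hm⟩
    refine ⟨Finpartition.ofSetoid (Setoid.ker m), Subtype.ext (funext fun i => ?_)⟩
    have key : ∀ i j, j ∈ (Finpartition.ofSetoid (Setoid.ker m)).part i ↔ m i = m j := by
      intro i j
      rw [Finpartition.mem_part_ofSetoid_iff_rel]
      rfl
    apply le_antisymm
    · exact Finset.min'_le _ _ ((key _ _).2 (hm i).2.symm)
    · have h := (key _ _).1 (partMin_mem (Finpartition.ofSetoid (Setoid.ker m)) i)
      exact h.trans_le (hm _).1

lemma card_avoids2413 (n : ℕ) :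
    Nat.card {π : Equiv.Perm (Fin n) // Avoids2413 π} = bell n := by
  rw [card_avoids_eq_blockMin, bell_eq_blockMin]

/-! ### Decomposition of `2̄4135̄`-avoiders by the last entry -/

section Decomposition

variable {a b : ℕ}

/-- A position among the first `a` of `a + b + 1`. -/
def lowPos (b : ℕ) (x : Fin a) : Fin (a + b + 1) := ⟨x, by omega⟩

/-- A position among the `b` positions after the first `a`. -/
def highPos (a : ℕ) (y : Fin b) : Fin (a + b + 1) := ⟨a + y, by omega⟩

/-- `π` is `α ⊕ β` followed by an entry whose value lies between those of `α` and of `β`. -/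
def Glues (α : Equiv.Perm (Fin a)) (β : Equiv.Perm (Fin b))
    (π : Equiv.Perm (Fin (a + b + 1))) : Prop :=
  (∀ x, (π (lowPos b x) : ℕ) = α x) ∧ (∀ y, (π (highPos a y) : ℕ) = a + 1 + β y) ∧
    (π (Fin.last (a + b)) : ℕ) = a

lemma pos_cases (i : Fin (a + b + 1)) :
    (∃ x, i = lowPos b x) ∨ (∃ y, i = highPos a y) ∨ i = Fin.last (a + b) := by
  by_cases h : (i : ℕ) < a
  · exact Or.inl ⟨⟨i, h⟩, rfl⟩
  by_cases h' : (i : ℕ) < a + b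
  · refine Or.inr (Or.inl ⟨⟨i - a, by omega⟩, ?_⟩)
    apply Fin.ext
    simp only [highPos]
    omega
  · refine Or.inr (Or.inr ?_)
    apply Fin.ext
    simp only [Fin.val_last]
    omega

lemma Glues.avoids_iff {α : Equiv.Perm (Fin a)} {β : Equiv.Perm (Fin b)}
    {π : Equiv.Perm (Fin (a + b + 1))} (G : Glues α β π) :
    Avoids24135 π ↔ Avoids2413 α ∧ Avoids24135 β := by
  obtain ⟨G1, G2, G3⟩ := G
  constructor
  · intro H
    constructor
    · intro i j k hij hjk h1 h2
      obtain ⟨h, l, e1, -, e3, e4, -⟩ := H (lowPos b i) (lowPos b j) (lowPos b k) hij hjk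
        (by rw [Fin.lt_def, G1, G1]; exact h1) (by rw [Fin.lt_def, G1, G1]; exact h2)
      rcases pos_cases h with ⟨x, rfl⟩ | ⟨x, rfl⟩ | rfl
      · rw [Fin.lt_def, G1, G1] at e3 e4
        exact ⟨x, e1, e3, e4⟩
      · rw [Fin.lt_def] at e1; simp only [highPos, lowPos] at e1; omega
      · rw [Fin.lt_def] at e1; simp only [Fin.val_last, lowPos] at e1; omega
    · intro i j k hij hjk h1 h2
      obtain ⟨h, l, e1, e2, e3, e4, e5⟩ := H (highPos a i) (highPos a j) (highPos a k)
        (Nat.add_lt_add_left hij a) (Nat.add_lt_add_left hjk a)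
        (by rw [Fin.lt_def, G2, G2]; exact Nat.add_lt_add_left h1 _)
        (by rw [Fin.lt_def, G2, G2]; exact Nat.add_lt_add_left h2 _)
      have hh : ∃ y, h = highPos a y := by
        rcases pos_cases h with ⟨x, rfl⟩ | ⟨x, rfl⟩ | rfl
        · rw [Fin.lt_def, G1, G2] at e3; omega
        · exact ⟨x, rfl⟩
        · rw [Fin.lt_def, G3, G2] at e3; omega
      have hl : ∃ y, l = highPos a y := by
        rcases pos_cases l with ⟨x, rfl⟩ | ⟨x, rfl⟩ | rfl
        · rw [Fin.lt_def, G1, G2] at e5; omega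
        · exact ⟨x, rfl⟩
        · rw [Fin.lt_def, G3, G2] at e5; omega
      obtain ⟨y, rfl⟩ := hh
      obtain ⟨z, rfl⟩ := hl
      rw [Fin.lt_def, G2, G2] at e3 e4 e5
      simp only [Fin.lt_def, highPos] at e1 e2
      refine ⟨y, z, ?_, ?_, ?_, ?_, ?_⟩ <;> rw [Fin.lt_def] <;> omega
  · rintro ⟨H1, H2⟩ i j k hij hjk h1 h2
    rw [Fin.lt_def] at hij hjk h1 h2
    rcases pos_cases k with ⟨k, rfl⟩ | ⟨k, rfl⟩ | rfl
    · have hi : ∃ x, i = lowPos b x :=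
        ⟨⟨i, by simp only [lowPos] at hjk; omega⟩, rfl⟩
      have hj : ∃ x, j = lowPos b x :=
        ⟨⟨j, by simp only [lowPos] at hjk; omega⟩, rfl⟩
      obtain ⟨i, rfl⟩ := hi
      obtain ⟨j, rfl⟩ := hj
      rw [G1, G1] at h1 h2
      obtain ⟨h, e1, e2, e3⟩ := H1 i j k hij hjk h1 h2
      refine ⟨lowPos b h, Fin.last _, e1, ?_, ?_, ?_, ?_⟩
      · rw [Fin.lt_def]; simp only [lowPos, Fin.val_last]; omega
      · rw [Fin.lt_def, G1, G1]; exact e2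
      · rw [Fin.lt_def, G1, G1]; exact e3
      · rw [Fin.lt_def, G1, G3]; omega
    · rw [G2] at h1 h2
      rcases pos_cases i with ⟨i, rfl⟩ | ⟨i, rfl⟩ | rfl
      · rw [G1] at h2; omega
      · rcases pos_cases j with ⟨j, rfl⟩ | ⟨j, rfl⟩ | rfl
        · simp only [lowPos, highPos] at hij; omega
        · rw [G2] at h1 h2
          simp only [highPos] at hij hjk
          obtain ⟨h, l, e1, e2, e3, e4, e5⟩ := H2 i j k (by rw [Fin.lt_def]; omega)
            (by rw [Fin.lt_def]; omega) (by rw [Fin.lt_def]; omega) (by rw [Fin.lt_def]; omega)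
          rw [Fin.lt_def] at e1 e2 e3 e4 e5
          refine ⟨highPos a h, highPos a l, Nat.add_lt_add_left e1 a, Nat.add_lt_add_left e2 a,
            ?_, ?_, ?_⟩ <;> rw [Fin.lt_def, G2, G2] <;> omega
        · simp only [Fin.val_last, highPos] at hjk; omega
      · rw [G3] at h2; omega
    · rw [G3] at h1 h2
      rcases pos_cases i with ⟨i, rfl⟩ | ⟨i, rfl⟩ | rfl
      · rw [G1] at h2; omega
      · rcases pos_cases j with ⟨j, rfl⟩ | ⟨j, rfl⟩ | rfl
        · simp only [lowPos, highPos] at hij; omega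
        · rw [G2] at h1; omega
        · omega
      · rw [G3] at h2; omega

lemma exists_glues (α : Equiv.Perm (Fin a)) (β : Equiv.Perm (Fin b)) :
    ∃ π, Glues α β π := by
  let f : Fin (a + b + 1) → Fin (a + b + 1) := fun i =>
    if h : (i : ℕ) < a then ⟨α ⟨i, h⟩, by omega⟩
    else if h' : (i : ℕ) < a + b then ⟨a + 1 + β ⟨i - a, by omega⟩, by omega⟩
    else ⟨a, by omega⟩
  have f1 : ∀ x, (f (lowPos b x) : ℕ) = α x := fun x => by simp [f, lowPos]
  have f2 : ∀ y, (f (highPos a y) : ℕ) = a + 1 + β y := fun y => by simp [f, highPos]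
  have f3 : (f (Fin.last (a + b)) : ℕ) = a := by simp [f]
  have hf : Function.Injective f := by
    intro i j h
    have h := congrArg Fin.val h
    rcases pos_cases i with ⟨i, rfl⟩ | ⟨i, rfl⟩ | rfl <;>
      rcases pos_cases j with ⟨j, rfl⟩ | ⟨j, rfl⟩ | rfl <;>
      simp only [f1, f2, f3] at h <;> first | omega | skip
    · exact congrArg (lowPos b) (α.injective (Fin.ext h))
    · exact congrArg (highPos a) (β.injective (Fin.ext (by omega)))
  exact ⟨Equiv.ofBijective f (Finite.injective_iff_bijective.1 hf), f1, f2, f3⟩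

lemma Glues.unique {α : Equiv.Perm (Fin a)} {β : Equiv.Perm (Fin b)}
    {π σ : Equiv.Perm (Fin (a + b + 1))} (h : Glues α β π) (h' : Glues α β σ) : π = σ := by
  apply Equiv.ext
  intro i
  apply Fin.ext
  rcases pos_cases i with ⟨i, rfl⟩ | ⟨i, rfl⟩ | rfl
  · rw [h.1, h'.1]
  · rw [h.2.1, h'.2.1]
  · rw [h.2.2, h'.2.2]

/-- A `413`-pattern ending in the last position has no `5`, so the entries smaller than the last
one come first. -/
lemma lt_iff_of_avoids_last {π : Equiv.Perm (Fin (a + b + 1))} (H : Avoids24135 π)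
    (hl : (π (Fin.last (a + b)) : ℕ) = a) (i : Fin (a + b + 1)) :
    (π i : ℕ) < a ↔ (i : ℕ) < a := by
  have hlow : ∀ i j : Fin (a + b + 1), j ≤ i → (π i : ℕ) < a → (π j : ℕ) < a := by
    intro i j hji hi
    by_contra hc
    have hi_last : i < Fin.last (a + b) :=
      lt_of_le_of_ne (Fin.le_last i) (fun e => by rw [e] at hi; omega)
    have hj_ne : (π j : ℕ) ≠ a := fun e =>
      (hji.trans_lt hi_last).ne (π.injective (Fin.ext (e.trans hl.symm)))
    have hlt : j < i := lt_of_le_of_ne hji (fun e => by rw [e] at hc; omega)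
    obtain ⟨-, l, -, e, -⟩ := H j i (Fin.last _) hlt hi_last
      (by rw [Fin.lt_def]; omega) (by rw [Fin.lt_def]; omega)
    exact (Fin.le_last l).not_gt e
  have hsub : ∀ i : Fin (a + b + 1), (π i : ℕ) < a → (i : ℕ) < a := by
    intro i hi
    have hc : (Finset.Iic i).card ≤ (Finset.range a).card := by
      refine Finset.card_le_card_of_injOn (fun j => (π j : ℕ)) ?_ ?_
      · intro j hj
        simpa using hlow i j (by simpa using hj) hi
      · intro x _ y _ hxy
        exact π.injective (Fin.ext hxy)
    simp only [Fin.card_Iic, Finset.card_range] at hc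
    omega
  refine ⟨hsub i, fun hi => ?_⟩
  -- The `a` positions of the values below `a` inject into the first `a` positions, hence fill them.
  let g : Fin a → Fin a := fun x => ⟨π.symm ⟨x, by omega⟩, hsub _ (by simp)⟩
  have hg : Function.Injective g := by
    intro x y h
    have hv : (π.symm ⟨x, by omega⟩ : ℕ) = π.symm ⟨y, by omega⟩ := by
      simpa only [g, Fin.mk.injEq] using h
    have := π.symm.injective (Fin.ext hv)
    exact Fin.ext (by simpa using this)
  obtain ⟨x, hx⟩ := Finite.injective_iff_surjective.1 hg ⟨i, hi⟩
  have hv : (π.symm ⟨x, by omega⟩ : ℕ) = i := by simpa only [g, Fin.mk.injEq] using hx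
  have : π.symm ⟨x, by omega⟩ = i := Fin.ext hv
  rw [← this]
  simp

lemma exists_of_avoids {π : Equiv.Perm (Fin (a + b + 1))} (H : Avoids24135 π)
    (hl : (π (Fin.last (a + b)) : ℕ) = a) :
    ∃ (α : Equiv.Perm (Fin a)) (β : Equiv.Perm (Fin b)), Glues α β π := by
  have key := lt_iff_of_avoids_last H hl
  let f : Fin a → Fin a := fun x => ⟨π (lowPos b x), (key _).2 (by simp [lowPos])⟩
  have hf : Function.Injective f := by
    intro x y h
    have hv : (π (lowPos b x) : ℕ) = π (lowPos b y) := by simpa only [f, Fin.mk.injEq] using h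
    have := π.injective (Fin.ext hv)
    exact Fin.ext (by simpa [lowPos] using this)
  have hhigh : ∀ y : Fin b, a < (π (highPos a y) : ℕ) := by
    intro y
    have h1 : ¬ (π (highPos a y) : ℕ) < a := by rw [key]; simp [highPos]
    have h2 : (π (highPos a y) : ℕ) ≠ a := fun e => by
      have := congrArg Fin.val (π.injective (Fin.ext (e.trans hl.symm)))
      simp only [highPos, Fin.val_last] at this
      omega
    omega
  let g : Fin b → Fin b := fun y => ⟨π (highPos a y) - (a + 1), by have := hhigh y; omega⟩
  have hg : Function.Injective g := by
    intro x y h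
    have h' : (π (highPos a x) : ℕ) - (a + 1) = π (highPos a y) - (a + 1) := congrArg Fin.val h
    have hx := hhigh x
    have hy := hhigh y
    have := π.injective (Fin.ext (show (π (highPos a x) : ℕ) = π (highPos a y) by omega))
    exact Fin.ext (by simpa [highPos] using this)
  refine ⟨Equiv.ofBijective f (Finite.injective_iff_bijective.1 hf),
    Equiv.ofBijective g (Finite.injective_iff_bijective.1 hg), fun x => rfl, fun y => ?_, hl⟩
  have := hhigh y
  simp only [Equiv.ofBijective_apply, g]
  omega

lemma card_fiber (a b : ℕ) :
    Nat.card {π : Equiv.Perm (Fin (a + b + 1)) //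
      Avoids24135 π ∧ (π (Fin.last (a + b)) : ℕ) = a} = bell a * avoidCount b := by
  rw [← card_avoids2413, avoidCount, ← Nat.card_prod]
  symm
  choose F hF using fun (α : Equiv.Perm (Fin a)) (β : Equiv.Perm (Fin b)) => exists_glues α β
  refine Nat.card_congr (Equiv.ofBijective
    (fun p => ⟨F p.1.1 p.2.1, (hF _ _).avoids_iff.2 ⟨p.1.2, p.2.2⟩, (hF _ _).2.2⟩) ⟨?_, ?_⟩)
  · rintro ⟨⟨α, hα⟩, ⟨β, hβ⟩⟩ ⟨⟨α', hα'⟩, ⟨β', hβ'⟩⟩ h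
    have h : F α β = F α' β' := congrArg Subtype.val h
    have e := hF α β
    have e' := hF α' β'
    rw [h] at e
    have h1 : α = α' := Equiv.ext fun x => Fin.ext ((e.1 x).symm.trans (e'.1 x))
    have h2 : β = β' := Equiv.ext fun y => Fin.ext (by
      have := (e.2.1 y).symm.trans (e'.2.1 y)
      omega)
    subst h1 h2
    rfl
  · rintro ⟨π, H, hl⟩
    obtain ⟨α, β, G⟩ := exists_of_avoids H hl
    obtain ⟨hα, hβ⟩ := G.avoids_iff.1 H
    exact ⟨⟨⟨α, hα⟩, ⟨β, hβ⟩⟩, Subtype.ext ((hF α β).unique G)⟩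

end Decomposition

lemma avoidCount_succ (n : ℕ) :
    avoidCount (n + 1) = ∑ p ∈ Finset.HasAntidiagonal.antidiagonal n, bell p.1 * avoidCount p.2 := by
  classical
  have h1 : ∀ p ∈ Finset.HasAntidiagonal.antidiagonal n, bell p.1 * avoidCount p.2 =
      (Finset.univ.filter (fun π : Equiv.Perm (Fin (n + 1)) =>
        Avoids24135 π ∧ (π (Fin.last n) : ℕ) = p.1)).card := by
    rintro ⟨a, b⟩ hp
    obtain rfl : a + b = n := by simpa using hp
    rw [← card_fiber, Nat.card_eq_fintype_card, Fintype.card_subtype]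
  rw [Finset.sum_congr rfl h1, Finset.Nat.sum_antidiagonal_eq_sum_range_succ_mk, avoidCount,
    Nat.card_eq_fintype_card, Fintype.card_subtype,
    Finset.card_eq_sum_card_fiberwise (f := fun π => (π (Fin.last n) : ℕ))
      (t := Finset.range n.succ) (fun π _ => by simpa using Fin.is_le _)]
  simp only [Finset.filter_filter]

lemma avoidCount_zero : avoidCount 0 = 1 := by
  have : Subsingleton (Equiv.Perm (Fin 0)) := inferInstance
  exact Nat.card_eq_one_iff_unique.2 ⟨inferInstance, ⟨1, fun i => i.elim0⟩⟩

end Barred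

/-- (1 − Σ_{n≥1} B_{n-1} xⁿ) · (1 + Σ_{n≥1} b_n xⁿ) = 1 as formal power series over ℚ. -/
theorem stmt1 :
    (1 - PowerSeries.mk (fun n => if n = 0 then 0 else (bell (n - 1) : ℚ))) *
      (1 + PowerSeries.mk (fun n => if n = 0 then 0 else (avoidCount n : ℚ))) = 1 := by
  have hF : PowerSeries.mk (fun n => if n = 0 then 0 else (bell (n - 1) : ℚ)) =
      PowerSeries.X * PowerSeries.mk (fun n => (bell n : ℚ)) := by
    ext n
    cases n <;> simp [PowerSeries.coeff_succ_X_mul]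
  have hG : 1 + PowerSeries.mk (fun n => if n = 0 then 0 else (avoidCount n : ℚ)) =
      PowerSeries.mk (fun n => (avoidCount n : ℚ)) := by
    ext n
    cases n <;> simp [Barred.avoidCount_zero, PowerSeries.coeff_one]
  have key : PowerSeries.mk (fun n => (avoidCount n : ℚ)) = 1 + PowerSeries.X *
      (PowerSeries.mk (fun n => (bell n : ℚ)) * PowerSeries.mk (fun n => (avoidCount n : ℚ))) := by
    ext n
    cases n with
    | zero => simp [Barred.avoidCount_zero]
    | succ n =>
      rw [map_add, PowerSeries.coeff_succ_X_mul, PowerSeries.coeff_mul]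
      simp [PowerSeries.coeff_one, Barred.avoidCount_succ]
  rw [hF, hG]
  linear_combination key
end

section
/- For every n ≥ 1, the number of permutations of [n] avoiding the barred pattern 2̄4135̄ equals the sum, over all compositions (k_1, k_2, …, k_r) of n into positive parts, of the product B_{k_1−1} · B_{k_2−1} · … · B_{k_r−1}, where B_m denotes the m-th Bell number. -/
namespace Barred

/-! ### Avoidance for bijections of finite linear orders -/

section Generic
variable {α β γ δ : Type*}

/-- `Avoids2413` for a map between arbitrary ordered types. -/
def Av2413 [LT α] [LT β] (f : α → β) : Prop :=
  ∀ i j k : α, i < j → j < k → f j < f k → f k < f i →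
    ∃ h : α, h < i ∧ f j < f h ∧ f h < f k

/-- `Avoids24135` for a map between arbitrary ordered types. -/
def Av24135 [LT α] [LT β] (f : α → β) : Prop :=
  ∀ i j k : α, i < j → j < k → f j < f k → f k < f i →
    ∃ h l : α, h < i ∧ k < l ∧ f j < f h ∧ f h < f k ∧ f i < f l

/-- The number of permutations of `[n]` avoiding `2̄413`. -/
noncomputable def count2413 (n : ℕ) : ℕ := Nat.card {e : Equiv.Perm (Fin n) // Av2413 e}

theorem av2413_conj [Preorder α] [Preorder β] [Preorder γ] [Preorder δ]
    (a : α ≃o γ) (b : β ≃o δ) (e : α ≃ β) :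
    Av2413 e ↔ Av2413 (Equiv.equivCongr a.toEquiv b.toEquiv e) := by
  simp only [Av2413, ← a.toEquiv.forall_congr_right (q := fun _ => _),
    ← a.toEquiv.exists_congr_right (q := fun _ => _)]
  simp

theorem av24135_conj [Preorder α] [Preorder β] [Preorder γ] [Preorder δ]
    (a : α ≃o γ) (b : β ≃o δ) (e : α ≃ β) :
    Av24135 e ↔ Av24135 (Equiv.equivCongr a.toEquiv b.toEquiv e) := by
  simp only [Av24135, ← a.toEquiv.forall_congr_right (q := fun _ => _),
    ← a.toEquiv.exists_congr_right (q := fun _ => _)]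
  simp

/-- The count depends only on the sizes of the ordered sets. -/
theorem card_av2413 [LinearOrder α] [Fintype α] [LinearOrder β] [Fintype β] {n : ℕ}
    (ha : Fintype.card α = n) (hb : Fintype.card β = n) :
    Nat.card {e : α ≃ β // Av2413 e} = count2413 n :=
  Nat.card_congr (Equiv.subtypeEquiv
    (Equiv.equivCongr (Fintype.orderIsoFinOfCardEq α ha).symm.toEquiv
      (Fintype.orderIsoFinOfCardEq β hb).symm.toEquiv)
    (av2413_conj (Fintype.orderIsoFinOfCardEq α ha).symm
      (Fintype.orderIsoFinOfCardEq β hb).symm))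

theorem card_av24135 [LinearOrder α] [Fintype α] [LinearOrder β] [Fintype β] {n : ℕ}
    (ha : Fintype.card α = n) (hb : Fintype.card β = n) :
    Nat.card {e : α ≃ β // Av24135 e} = avoidCount n :=
  Nat.card_congr (Equiv.subtypeEquiv
    (Equiv.equivCongr (Fintype.orderIsoFinOfCardEq α ha).symm.toEquiv
      (Fintype.orderIsoFinOfCardEq β hb).symm.toEquiv)
    (av24135_conj (Fintype.orderIsoFinOfCardEq α ha).symm
      (Fintype.orderIsoFinOfCardEq β hb).symm))

/-- There is exactly one decreasing bijection between linear orders of the same finite size. -/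
theorem card_strictAnti [LinearOrder α] [Fintype α] [LinearOrder β] [Fintype β] {n : ℕ}
    (ha : Fintype.card α = n) (hb : Fintype.card β = n) :
    Nat.card {e : α ≃ β // StrictAnti e} = 1 := by
  let E : {e : α ≃ β // StrictAnti e} ≃ (α ≃o βᵒᵈ) :=
    { toFun := fun e => ⟨e.1.trans OrderDual.toDual, fun {x y} => e.2.le_iff_ge⟩
      invFun := fun o => ⟨o.toEquiv.trans OrderDual.ofDual, fun x y h => o.strictMono h⟩
      left_inv := fun e => rfl
      right_inv := fun o => rfl }
  rw [Nat.card_congr E, Nat.card_eq_one_iff_unique]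
  exact ⟨OrderIso.subsingleton_of_wellFoundedLT,
    ⟨(Fintype.orderIsoFinOfCardEq α ha).symm.trans (Fintype.orderIsoFinOfCardEq βᵒᵈ hb)⟩⟩

/-- If `R` forces a bijection to carry `{p}` to `{q}` and then splits into a condition `P` on the
restriction to `{p}` and a condition `Q` on the restriction to the complement, the bijections
satisfying `R` are counted by a product. -/
theorem card_split (p : α → Prop) (q : β → Prop)
    (P : ({x // p x} ≃ {y // q y}) → Prop) (Q : ({x // ¬ p x} ≃ {y // ¬ q y}) → Prop)
    (R : α ≃ β → Prop) (hpq : ∀ e, R e → ∀ x, p x ↔ q (e x))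
    (hR : ∀ e (h : ∀ x, p x ↔ q (e x)),
      R e ↔ P (e.subtypeEquiv h) ∧ Q (e.subtypeEquiv fun x => not_congr (h x))) :
    Nat.card {e // R e} = Nat.card {a // P a} * Nat.card {b // Q b} := by
  classical
  rw [← Nat.card_prod]
  let glue (a : {x // p x} ≃ {y // q y}) (b : {x // ¬ p x} ≃ {y // ¬ q y}) : α ≃ β :=
    (Equiv.sumCompl p).symm.trans ((Equiv.sumCongr a b).trans (Equiv.sumCompl q))
  have g1 : ∀ a b x (hx : p x), glue a b x = a ⟨x, hx⟩ := by
    intro a b x hx; simp [glue, hx]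
  have g2 : ∀ a b x (hx : ¬ p x), glue a b x = b ⟨x, hx⟩ := by
    intro a b x hx; simp [glue, hx]
  have g3 : ∀ a b x, p x ↔ q (glue a b x) := by
    intro a b x
    by_cases hx : p x
    · simp only [hx, g1 a b x hx, (a ⟨x, hx⟩).2]
    · simp only [hx, g2 a b x hx, (b ⟨x, hx⟩).2]
  have g4 : ∀ a b, (glue a b).subtypeEquiv (g3 a b) = a := by
    intro a b; ext x; simp [g1 a b x x.2]
  have g5 : ∀ a b, (glue a b).subtypeEquiv (fun x => not_congr (g3 a b x)) = b := by
    intro a b; ext x; simp [g2 a b x x.2]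
  refine Nat.card_congr
    { toFun := fun e => ⟨⟨_, ((hR e.1 (hpq e.1 e.2)).1 e.2).1⟩, ⟨_, ((hR e.1 (hpq e.1 e.2)).1 e.2).2⟩⟩
      invFun := fun ab => ⟨glue ab.1.1 ab.2.1, (hR _ (g3 _ _)).2
        ⟨by rw [g4]; exact ab.1.2, by rw [g5]; exact ab.2.2⟩⟩
      left_inv := ?_
      right_inv := ?_ }
  · intro e
    ext x
    by_cases hx : p x
    · simp [g1 _ _ x hx]
    · simp [g2 _ _ x hx]
  · intro ab
    ext x
    · simp [g4]
    · simp [g5]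

theorem card_fibers {X ι : Type*} [Fintype ι] [Finite X] (f : X → ι) :
    Nat.card X = ∑ i, Nat.card {x // f x = i} := by
  rw [← Nat.card_sigma]
  exact Nat.card_congr (Equiv.sigmaFiberEquiv f).symm

theorem card_fibers_subtype {X ι : Type*} [Fintype ι] [Finite X] (P : X → Prop) (f : X → ι) :
    Nat.card {x // P x} = ∑ i, Nat.card {x // P x ∧ f x = i} := by
  rw [card_fibers fun x : {x // P x} => f x.1]
  exact Finset.sum_congr rfl fun i _ =>
    Nat.card_congr (Equiv.subtypeSubtypeEquivSubtypeInter P fun x => f x = i)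

end Generic

/-! ### The pattern `2̄413` is counted by the Bell numbers -/

theorem card_of_mem_iff_le {n : ℕ} {U : Finset (Fin (n + 1))} {e : Equiv.Perm (Fin (n + 1))}
    {w : Fin (n + 1)} (h : ∀ x, x ∈ U ↔ e x ≤ w) : U.card = w + 1 := by
  have : U.map e.toEmbedding = Finset.Iic w := by
    ext y
    simp only [Finset.mem_map_equiv, Finset.mem_Iic, h, Equiv.apply_symm_apply]
  rw [← Finset.card_map e.toEmbedding, this, Fin.card_Iic]

/-- Let `U` be the set of positions carrying a value at most `v`, with `v` sized so that the
condition that `U` consists of the values at most `e 0` amounts to `e 0 = v`. Then `e` avoids `2̄413`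
exactly when it is decreasing on `U` and avoids `2̄413` off `U`: a `413` starting at the first position
has no possible `2`, while the first entry serves as the `2` for any later `413` whose `1` lies in
`U` and whose `3` does not. -/
theorem av2413_split {n : ℕ} {U : Finset (Fin (n + 1))} (h0 : 0 ∈ U) {v : Fin (n + 1)}
    (hv : U.card = v + 1) (e : Equiv.Perm (Fin (n + 1))) (h : ∀ x, x ∈ U ↔ e x ≤ v) :
    (Av2413 e ∧ ∀ x, x ∈ U ↔ e x ≤ e 0) ↔
      StrictAnti (e.subtypeEquiv (p := fun x => x ∈ U) (q := fun y => y ≤ v) h) ∧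
        Av2413 (e.subtypeEquiv (p := fun x => ¬ x ∈ U) (q := fun y => ¬ y ≤ v)
          fun x => not_congr (h x)) := by
  constructor
  · rintro ⟨hav, hU⟩
    have he0 : e 0 = v := by
      have := card_of_mem_iff_le hU
      ext
      omega
    refine ⟨?_, ?_⟩
    · rintro ⟨x, hx⟩ ⟨y, hy⟩ hxy
      change x < y at hxy
      change e y < e x
      by_contra hlt
      have hlt : e x < e y := lt_of_le_of_ne (not_lt.1 hlt) fun h => hxy.ne (e.injective h)
      have hy0 : e y < e 0 := lt_of_le_of_ne ((hU y).1 hy) fun h => by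
        have := e.injective h
        subst this
        exact absurd hxy (Fin.not_lt_zero x)
      have hx0 : 0 < x := Fin.pos_iff_ne_zero.2 fun h => by
        subst h
        exact lt_asymm hlt hy0
      obtain ⟨z, hz, -⟩ := hav 0 x y hx0 hxy hlt hy0
      exact Fin.not_lt_zero z hz
    · rintro ⟨i, hi⟩ ⟨j, hj⟩ ⟨k, hk⟩ hij hjk h1 h2
      obtain ⟨z, hz, h3, h4⟩ := hav i j k hij hjk h1 h2
      have hzU : z ∉ U := by
        rw [h] at hj ⊢
        exact fun hle => hj (h3.le.trans hle)
      exact ⟨⟨z, hzU⟩, hz, h3, h4⟩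
  · rintro ⟨hanti, hav⟩
    have hanti' : ∀ x y, x ∈ U → y ∈ U → x < y → e y < e x := fun x y hx hy hxy =>
      hanti (show (⟨x, hx⟩ : {x // x ∈ U}) < ⟨y, hy⟩ from hxy)
    have he0 : e 0 = v := by
      by_contra hne
      have hmem : e.symm v ∈ U := by rw [h]; simp
      have hpos : 0 < e.symm v := Fin.pos_iff_ne_zero.2 fun h => hne (by rw [← h]; simp)
      have h1 := hanti' _ _ h0 hmem hpos
      have h2 := (h 0).1 h0
      simp only [Equiv.apply_symm_apply] at h1
      exact absurd h1 (not_lt.2 h2)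
    refine ⟨?_, fun x => by rw [he0]; exact h x⟩
    intro i j k hij hjk h1 h2
    by_cases hj : j ∈ U
    · by_cases hk : k ∈ U
      · exact absurd h1 (lt_asymm (hanti' j k hj hk hjk))
      · have hk' : e 0 < e k := by
          rw [h, not_le] at hk
          rwa [he0]
        have hi0 : 0 < i := Fin.pos_iff_ne_zero.2 fun h => by
          subst h
          exact lt_asymm hk' h2
        exact ⟨0, hi0, hanti' 0 j h0 hj (hi0.trans hij), hk'⟩
    · have hk : k ∉ U := by
        rw [h] at hj ⊢
        exact fun hle => hj (h1.le.trans hle)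
      have hi : i ∉ U := by
        rw [h] at hk ⊢
        exact fun hle => hk (h2.le.trans hle)
      obtain ⟨z, hz, h3, h4⟩ := hav ⟨i, hi⟩ ⟨j, hj⟩ ⟨k, hk⟩ hij hjk h1 h2
      exact ⟨z.1, hz, h3, h4⟩

/-- A `2̄413`-avoider of length `n + 1` is determined by the set `V` of non-initial positions carrying
values below the first entry and by the avoider formed by the entries above it. -/
theorem count2413_succ (n : ℕ) :
    count2413 (n + 1) = ∑ V : Finset (Fin n), count2413 (n - V.card) := by
  rw [count2413, card_fibers_subtype _ fun e : Equiv.Perm (Fin (n + 1)) =>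
    Finset.univ.filter fun i : Fin n => e i.succ ≤ e 0]
  refine Finset.sum_congr rfl fun V _ => ?_
  have hVn : V.card ≤ n := by simpa using V.card_le_univ
  let U : Finset (Fin (n + 1)) := Finset.cons 0 (V.map (Fin.succEmb n)) (by simp)
  have hU0 : 0 ∈ U := by simp [U]
  let v : Fin (n + 1) := ⟨V.card, by omega⟩
  have hU : U.card = v + 1 := by simp [U, v]
  have hfib : ∀ e : Equiv.Perm (Fin (n + 1)),
      (Av2413 e ∧ (Finset.univ.filter fun i : Fin n => e i.succ ≤ e 0) = V) ↔
        (Av2413 e ∧ ∀ x, x ∈ U ↔ e x ≤ e 0) := by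
    intro e
    refine and_congr_right fun _ => ?_
    rw [Fin.forall_fin_succ, Finset.ext_iff]
    simp [U, iff_comm]
  have hcardp : Fintype.card {x // ¬ x ∈ U} = n - V.card := by
    rw [Fintype.card_subtype_compl, Fintype.card_coe, hU, Fintype.card_fin]
    simp [v]
  have hcardq : Fintype.card {y : Fin (n + 1) // ¬ y ≤ v} = n - V.card := by
    rw [Fintype.card_subtype_compl, Fintype.card_subtype, Finset.filter_ge_eq_Iic, Fin.card_Iic]
    simp [v]
  have h1 : Nat.card {e : {x // x ∈ U} ≃ {y : Fin (n + 1) // y ≤ v} // StrictAnti e} = 1 := by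
    refine card_strictAnti (n := V.card + 1) ?_ ?_
    · rw [Fintype.card_coe, hU]
    · rw [Fintype.card_subtype, Finset.filter_ge_eq_Iic, Fin.card_Iic]
  rw [Nat.card_congr (Equiv.subtypeEquivRight hfib),
    card_split (fun x => x ∈ U) (fun y => y ≤ v) (fun a => StrictAnti a) (fun b => Av2413 b) _ ?_
      (av2413_split hU0 hU), h1, one_mul, card_av2413 hcardp hcardq]
  rintro e ⟨-, he⟩
  have hev : e 0 = v := by
    have := card_of_mem_iff_le he
    ext
    omega
  rwa [← hev]

theorem count2413_eq_bell (n : ℕ) : count2413 n = Nat.bell n := by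
  induction n using Nat.strong_induction_on with
  | _ n ih =>
    cases n with
    | zero =>
      rw [count2413, Nat.bell_zero, Nat.card_eq_one_iff_unique]
      exact ⟨inferInstance, ⟨⟨1, fun i => i.elim0⟩⟩⟩
    | succ n =>
      rw [count2413_succ, Nat.bell_succ, ← Nat.range_succ_eq_Iic,
        Finset.sum_congr rfl fun V _ => ih (n - V.card) (by omega), ← Finset.powerset_univ,
        Finset.sum_powerset_apply_card fun k => Nat.bell (n - k)]
      simp

/-! ### Set partitions and `Nat.bell` -/

/-- A partition of `insert a t` amounts to the rest `V ⊆ t` of the block of `a`, together with a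
partition of `t \ V`. -/
theorem card_finpartition_insert {α : Type*} [DecidableEq α] {a : α} {t : Finset α} (ha : a ∉ t) :
    Nat.card (Finpartition (insert a t)) = ∑ V ∈ t.powerset, Nat.card (Finpartition (t \ V)) := by
  have hne : ∀ V : Finset α, insert a V ≠ ⊥ := fun V => Finset.insert_ne_empty a V
  have hsplit : ∀ V ∈ t.powerset, t \ V ⊔ insert a V = insert a t := by
    intro V hV
    rw [Finset.mem_powerset] at hV
    ext x
    have := @hV x
    simp only [Finset.sup_eq_union, Finset.mem_union, Finset.mem_sdiff, Finset.mem_insert]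
    tauto
  have hdisj : ∀ V : Finset α, Disjoint (t \ V) (insert a V) := by
    intro V
    rw [Finset.disjoint_right]
    intro x hx
    rw [Finset.mem_insert] at hx
    rcases hx with rfl | hx <;> simp_all
  rw [← Finset.sum_coe_sort, ← Nat.card_sigma]
  symm
  refine Nat.card_congr (Equiv.ofBijective
    (fun x : (Σ V : t.powerset, Finpartition (t \ V.1)) =>
      x.2.extend (hne x.1.1) (hdisj x.1.1) (hsplit x.1.1 x.1.2)) ⟨?_, ?_⟩)
  · have hnot : ∀ (V : Finset α) (P : Finpartition (t \ V)) (B), B ∈ P.parts → a ∉ B := by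
      intro V P B hB haB
      have := P.le hB haB
      simp_all
    rintro ⟨⟨V, hV⟩, P⟩ ⟨⟨W, hW⟩, Q⟩ h
    have hparts : insert (insert a V) P.parts = insert (insert a W) Q.parts :=
      congrArg Finpartition.parts h
    rw [Finset.mem_powerset] at hV hW
    have hVW : V = W := by
      have h1 : insert a V ∈ insert (insert a W) Q.parts := by
        rw [← hparts]; exact Finset.mem_insert_self _ _
      rcases Finset.mem_insert.1 h1 with h1 | h1
      · rw [← Finset.erase_insert (fun h => ha (hV h)), h1,
          Finset.erase_insert (fun h => ha (hW h))]
      · exact absurd (Finset.mem_insert_self a V) (hnot _ Q _ h1)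
    subst hVW
    have hPQ : P = Q := by
      ext1
      have h1 : insert a V ∉ P.parts := fun h => hnot _ P _ h (Finset.mem_insert_self a V)
      have h2 : insert a V ∉ Q.parts := fun h => hnot _ Q _ h (Finset.mem_insert_self a V)
      rw [← Finset.erase_insert h1, hparts, Finset.erase_insert h2]
    rw [hPQ]
  · intro R
    have hain : a ∈ insert a t := Finset.mem_insert_self a t
    have hmem : a ∈ R.part a := R.mem_part_self.2 hain
    have hpart : R.part a ∈ R.parts := R.part_mem.2 hain
    have hins : insert a ((R.part a).erase a) = R.part a := Finset.insert_erase hmem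
    have hV : (R.part a).erase a ∈ t.powerset := by
      rw [Finset.mem_powerset]
      intro x hx
      rw [Finset.mem_erase] at hx
      exact (Finset.mem_insert.1 (R.part_subset a hx.2)).resolve_left hx.1
    have hsup : (R.parts.erase (R.part a)).sup id = t \ (R.part a).erase a := by
      ext x
      simp only [Finset.mem_sup, Finset.mem_erase, id, Finset.mem_sdiff]
      constructor
      · rintro ⟨B, ⟨hB1, hB2⟩, hxB⟩
        have hxn : x ∉ R.part a := fun hx => hB1 (R.eq_of_mem_parts hB2 hpart hxB hx)
        refine ⟨(Finset.mem_insert.1 (R.le hB2 hxB)).resolve_left ?_, fun h => hxn h.2⟩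
        rintro rfl
        exact hxn hmem
      · rintro ⟨hxt, hx⟩
        have hxa : x ≠ a := fun h => ha (h ▸ hxt)
        obtain ⟨B, hB, hxB⟩ := R.exists_mem (Finset.mem_insert_of_mem hxt)
        refine ⟨B, ⟨?_, hB⟩, hxB⟩
        rintro rfl
        exact hx ⟨hxa, hxB⟩
    refine ⟨⟨⟨_, hV⟩, R.ofSubset (Finset.erase_subset (R.part a) R.parts) hsup⟩, ?_⟩
    ext1
    simp only [Finpartition.extend_parts, Finpartition.ofSubset_parts]
    rw [hins, Finset.insert_erase hpart]

theorem card_finpartition {α : Type*} [DecidableEq α] (s : Finset α) :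
    Nat.card (Finpartition s) = Nat.bell s.card := by
  induction s using Finset.strongInduction with
  | _ s ih =>
    rcases s.eq_empty_or_nonempty with rfl | ⟨a, has⟩
    · rw [Finset.card_empty, Nat.bell_zero, Nat.card_eq_one_iff_unique]
      exact ⟨inferInstanceAs (Subsingleton (Finpartition (⊥ : Finset α))),
        ⟨Finpartition.empty _⟩⟩
    · obtain ⟨t, hat, rfl⟩ : ∃ t, a ∉ t ∧ insert a t = s :=
        ⟨s.erase a, Finset.notMem_erase a s, Finset.insert_erase has⟩
      rw [card_finpartition_insert hat, Finset.card_insert_of_notMem hat, Nat.bell_succ,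
        ← Nat.range_succ_eq_Iic]
      have hterm : ∀ V ∈ t.powerset,
          Nat.card (Finpartition (t \ V)) = Nat.bell (t.card - V.card) := by
        intro V hV
        rw [ih _ (lt_of_le_of_lt Finset.sdiff_subset (Finset.ssubset_insert hat)),
          Finset.card_sdiff_of_subset (Finset.mem_powerset.1 hV)]
      rw [Finset.sum_congr rfl hterm,
        Finset.sum_powerset_apply_card fun k => Nat.bell (t.card - k)]
      simp

theorem bell_eq (m : ℕ) : bell m = Nat.bell m := by
  rw [bell, card_finpartition, Finset.card_univ, Fintype.card_fin]

/-! ### Recursion for `2̄4135̄` -/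

/-- A smallest entry in the last place takes part in no `413` or `24135` pattern, so it can be
deleted. -/
theorem card_av24135_top {α β : Type*} [LinearOrder α] [Fintype α] [LinearOrder β] [Fintype β]
    {n : ℕ} (ha : Fintype.card α = n + 1) (hb : Fintype.card β = n + 1)
    (t : α) (s : β) (ht : ∀ x, x ≤ t) (hs : ∀ y, s ≤ y) :
    Nat.card {e : α ≃ β // Av24135 e ∧ e t = s} = avoidCount n := by
  rw [card_split (fun x => x = t) (fun y => y = s) (fun _ => True) (fun b => Av24135 b)]
  · rw [card_av24135 (n := n) (by simp [ha]) (by simp [hb])]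
    have : Nat.card {e : {x // x = t} ≃ {y // y = s} // True} = 1 := by
      rw [Nat.card_eq_one_iff_unique]
      exact ⟨inferInstance, ⟨⟨Equiv.ofUnique _ _, trivial⟩⟩⟩
    rw [this, one_mul]
  · rintro e ⟨-, he⟩ x
    rw [← he, e.injective.eq_iff]
  · intro e h
    have het : e t = s := (h t).1 rfl
    simp only [het, and_true, true_and]
    have hne : ∀ {x y}, e x < e y → y ≠ t := by
      rintro x y hxy rfl
      rw [het] at hxy
      exact absurd hxy (not_lt.2 (hs _))
    constructor
    · rintro hav ⟨i, hi⟩ ⟨j, hj⟩ ⟨k, hk⟩ hij hjk h1 h2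
      obtain ⟨z, l, hz, hl, h3, h4, h5⟩ := hav i j k hij hjk h1 h2
      exact ⟨⟨z, hne h3⟩, ⟨l, hne h5⟩, hz, hl, h3, h4, h5⟩
    · intro hav i j k hij hjk h1 h2
      obtain ⟨z, l, hz, hl, h3, h4, h5⟩ := hav ⟨i, hne h2⟩ ⟨j, (hjk.trans_le (ht k)).ne⟩
        ⟨k, hne h1⟩ hij hjk h1 h2
      exact ⟨z.1, l.1, hz, hl, h3, h4, h5⟩

/-- In a `2̄4135̄`-avoider with last entry `m`, the values below `m` fill the first positions: the last
entry cannot be the `3` of a `413`, since nothing follows it to be the `5`. -/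
theorem lt_iff_of_av24135 {n : ℕ} {e : Equiv.Perm (Fin (n + 1))} (hav : Av24135 e)
    (x : Fin (n + 1)) : x < e (Fin.last n) ↔ e x < e (Fin.last n) := by
  set m := e (Fin.last n) with hm
  let S : Finset (Fin (n + 1)) := Finset.univ.filter fun x => e x < m
  have hcard : S.card = m := by
    have : S.map e.toEmbedding = Finset.Iio m := by
      ext y
      simp [S, Finset.mem_map_equiv]
    rw [← Finset.card_map e.toEmbedding, this, Fin.card_Iio]
  have hlow : IsLowerSet (S : Set (Fin (n + 1))) := by
    intro y x hxy hy
    simp only [S, Finset.coe_filter, Finset.mem_univ, true_and, Set.mem_ofPred_eq] at hy ⊢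
    rcases hxy.eq_or_lt with rfl | hxy
    · exact hy
    have hyl : y < Fin.last n := lt_of_le_of_ne (Fin.le_last y) fun h => by
      rw [h] at hy
      exact lt_irrefl _ hy
    by_contra hx
    have hx : m < e x := lt_of_le_of_ne (not_lt.1 hx) fun h =>
      (hxy.trans hyl).ne (e.injective h.symm)
    obtain ⟨-, l, -, hl, -⟩ := hav x y (Fin.last n) hxy hyl hy hx
    exact absurd hl (not_lt.2 (Fin.le_last l))
  have hlow' : IsLowerSet ((Finset.Iio m : Finset (Fin (n + 1))) : Set (Fin (n + 1))) := by
    rw [Finset.coe_Iio]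
    exact isLowerSet_Iio m
  have heq : Finset.Iio m = S := by
    rcases hlow.total hlow' with h | h
    · exact (Finset.eq_of_subset_of_card_le (Finset.coe_subset.1 h) (by simp [hcard])).symm
    · exact Finset.eq_of_subset_of_card_le (Finset.coe_subset.1 h) (by simp [hcard])
  have := congrArg (x ∈ ·) heq
  simpa [S] using this

/-- A `2̄4135̄`-avoider with last entry `m` (0-based) has the form `L U m`, where `L` is a
`2̄413`-avoider on the values below `m` and `U` is a `2̄4135̄`-avoider on the values above `m`. -/
theorem avoidCount_succ_s2 (n : ℕ) :
    avoidCount (n + 1) = ∑ m : Fin (n + 1), count2413 m * avoidCount (n - m) := by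
  have h0 : avoidCount (n + 1) = Nat.card {e : Equiv.Perm (Fin (n + 1)) // Av24135 e} := rfl
  rw [h0, card_fibers_subtype _ fun e : Equiv.Perm (Fin (n + 1)) => e (Fin.last n)]
  refine Finset.sum_congr rfl fun m _ => ?_
  have hlast : ¬ Fin.last n < m := not_lt.2 (Fin.le_last m)
  have hlo : Fintype.card {x : Fin (n + 1) // x < m} = m := by
    rw [Fintype.card_subtype, Finset.filter_gt_eq_Iio, Fin.card_Iio]
  have hhi : Fintype.card {x : Fin (n + 1) // ¬ x < m} = n - m + 1 := by
    rw [Fintype.card_subtype_compl, hlo, Fintype.card_fin]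
    omega
  rw [card_split (fun x => x < m) (fun y => y < m) (fun a => Av2413 a)
    (fun b => Av24135 b ∧ b ⟨Fin.last n, hlast⟩ = ⟨m, lt_irrefl m⟩),
    card_av2413 hlo hlo, card_av24135_top hhi hhi _ _ (fun x => Fin.le_last x.1)
      (fun y => not_lt.1 y.2)]
  · rintro e ⟨hav, rfl⟩
    exact lt_iff_of_av24135 hav
  · intro e h
    constructor
    · rintro ⟨hav, hm⟩
      refine ⟨?_, ?_, Subtype.ext hm⟩
      · rintro ⟨i, hi⟩ ⟨j, hj⟩ ⟨k, hk⟩ hij hjk h1 h2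
        obtain ⟨z, l, hz, hl, h3, h4, h5⟩ := hav i j k hij hjk h1 h2
        exact ⟨⟨z, hz.trans hi⟩, hz, h3, h4⟩
      · rintro ⟨i, hi⟩ ⟨j, hj⟩ ⟨k, hk⟩ hij hjk h1 h2
        obtain ⟨z, l, hz, hl, h3, h4, h5⟩ := hav i j k hij hjk h1 h2
        have hz' : ¬ z < m := by
          rw [h] at hj ⊢
          exact fun hlt => hj (h3.trans hlt)
        exact ⟨⟨z, hz'⟩, ⟨l, fun hlt => hk (hl.trans hlt)⟩, hz, hl, h3, h4, h5⟩
    · rintro ⟨hlow, hup, hm⟩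
      have hm : e (Fin.last n) = m := congrArg Subtype.val hm
      refine ⟨?_, hm⟩
      intro i j k hij hjk h1 h2
      by_cases hk : k < m
      · have hj := hjk.trans hk
        have hi := hij.trans hj
        obtain ⟨z, hz, h3, h4⟩ := hlow ⟨i, hi⟩ ⟨j, hj⟩ ⟨k, hk⟩ hij hjk h1 h2
        -- The last entry, which is `m`, plays the role of the barred `5`.
        exact ⟨z.1, Fin.last n, hz, hk.trans_le (Fin.le_last m), h3, h4, by
          rw [hm]; exact (h i).1 hi⟩
      · have hi : ¬ i < m := by
          rw [h] at hk ⊢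
          exact fun hlt => hk (h2.trans hlt)
        have hj : ¬ j < m := fun hlt => hi (hij.trans hlt)
        obtain ⟨z, l, hz, hl, h3, h4, h5⟩ := hup ⟨i, hi⟩ ⟨j, hj⟩ ⟨k, hk⟩ hij hjk h1 h2
        exact ⟨z.1, l.1, hz, hl, h3, h4, h5⟩

/-! ### Sums over compositions -/

/-- Splitting off the first block of a composition of `n + 1`. -/
def compositionSuccEquiv (n : ℕ) :
    (Σ m : Fin (n + 1), Composition (n - m)) ≃ Composition (n + 1) where
  toFun x := ⟨(x.1 + 1) :: x.2.blocks,
    fun {i} hi => (List.mem_cons.1 hi).elim (fun h => h ▸ Nat.succ_pos _) x.2.blocks_pos,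
    by have := x.1.2; rw [List.sum_cons, x.2.blocks_sum]; omega⟩
  invFun c := match c with
    | ⟨[], _, hs⟩ => absurd hs (by simp)
    | ⟨k :: l, hp, hs⟩ =>
      ⟨⟨k - 1, by rw [List.sum_cons] at hs; omega⟩, l, fun hi => hp (List.mem_cons_of_mem _ hi), by
        have : 0 < k := hp List.mem_cons_self
        rw [List.sum_cons] at hs
        simp only
        omega⟩
  left_inv x := rfl
  right_inv c := by
    obtain ⟨_ | ⟨k, l⟩, hp, hs⟩ := c
    · simp at hs
    · have : 0 < k := hp List.mem_cons_self
      ext1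
      simp only
      rw [Nat.sub_add_cancel this]

theorem sum_composition_succ (f : ℕ → ℕ) (n : ℕ) :
    ∑ c : Composition (n + 1), (c.blocks.map f).prod =
      ∑ m : Fin (n + 1), f (m + 1) * ∑ c : Composition (n - m), (c.blocks.map f).prod := by
  rw [← (compositionSuccEquiv n).sum_comp, Fintype.sum_sigma]
  simp [compositionSuccEquiv, Finset.mul_sum]

theorem avoidCount_eq (n : ℕ) :
    avoidCount n = ∑ c : Composition n, (c.blocks.map (fun k => bell (k - 1))).prod := by
  induction n using Nat.strong_induction_on with
  | _ n ih =>
    cases n with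
    | zero =>
      have h1 : avoidCount 0 = 1 := by
        rw [avoidCount, Nat.card_eq_one_iff_unique]
        exact ⟨inferInstance, ⟨⟨1, fun i => i.elim0⟩⟩⟩
      have hsub : Subsingleton (Composition 0) :=
        Fintype.card_le_one_iff_subsingleton.1 (by simp [composition_card])
      rw [h1, Fintype.sum_eq_single (default : Composition 0)
        (fun c hc => absurd (Subsingleton.elim c _) hc)]
      have : (default : Composition 0).blocks = [] := by
        simp
      simp [this]
    | succ n =>
      rw [avoidCount_succ_s2, sum_composition_succ]
      refine Finset.sum_congr rfl fun m _ => ?_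
      rw [ih (n - m) (by omega), count2413_eq_bell, Nat.add_sub_cancel, bell_eq]

end Barred

/-- For n ≥ 1, the number of 2̄4135̄-avoiding permutations of [n] equals the sum over
compositions (k_1,…,k_r) of n of B_{k_1-1} ⋯ B_{k_r-1}. -/
theorem stmt2 (n : ℕ) (hn : 1 ≤ n) :
    avoidCount n = ∑ c : Composition n, (c.blocks.map (fun k => bell (k - 1))).prod :=
  Barred.avoidCount_eq n
end

section
/- Let π be a permutation of [n] avoiding the barred pattern 2̄4135̄, and let m be the position of the maximum entry n (i.e., π(m)=n). If there are positions i < j < m with π(i) > π(j) (an inversion among the entries before n, say with values c = π(i) and a = π(j), c > a), then every value b with a ≤ b ≤ c occurs at a position before m. -/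
/-- In a 2̄4135̄-avoiding permutation, if there is an inversion π i > π j (i < j < m,
m the position of the maximum), then every value between π j and π i occurs before m. -/
theorem stmt4 {n : ℕ} (π : Equiv.Perm (Fin n)) (h : Avoids24135 π)
    (m : Fin n) (hm : ∀ i, π i ≤ π m)
    (i j : Fin n) (hij : i < j) (hjm : j < m) (hinv : π j < π i) :
    ∀ b : Fin n, π j ≤ b → b ≤ π i → π.symm b < m := by
  intro b hb1 hb2
  by_contra hlt
  push Not at hlt
  obtain ⟨k, rfl⟩ := π.surjective b
  rw [Equiv.symm_apply_apply] at hlt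
  have hjk : π j ≠ π k := fun e => by
    have := π.injective e
    omega
  have hki : π k ≠ π i := fun e => by
    have := π.injective e
    omega
  -- `k = m` would force `π i` to be the maximum, hence `i = m`.
  have hmk : m < k := by
    refine lt_of_le_of_ne hlt fun e => hki ?_
    subst e
    exact le_antisymm hb2 (hm i)
  -- The entries `π i, π j, π k` form a 413-pattern, so some `π l > π i` has `l > k`.
  obtain ⟨-, l, -, hkl, -, -, hil⟩ :=
    h i j k hij (hjm.trans hmk) (lt_of_le_of_ne hb1 hjk) (lt_of_le_of_ne hb2 hki)
  have hlm : π l < π m := lt_of_le_of_ne (hm l) fun e => by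
    have := π.injective e
    omega
  -- The 413-pattern at `m, k, l` starts with the maximum, so nothing can play the role of 5.
  obtain ⟨-, l', -, -, -, -, hml⟩ := h m k l hmk hkl (hb2.trans_lt hil) hlm
  exact absurd (hm l') (not_le.mpr hml)
end

section
/- Let π be a permutation of [n] avoiding the barred pattern 2̄4135̄, let m be the position of the maximum entry n, and suppose the value b occurs at a position after m. Then there is no pair of positions i < j < m with π(j) < b < π(i); that is, no inversion among the entries occurring before n spans the value b. -/
/-- In a 2̄4135̄-avoiding permutation, if the value b occurs after the maximum, then no
inversion before the maximum spans b. -/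
theorem stmt5 {n : ℕ} (π : Equiv.Perm (Fin n)) (h : Avoids24135 π)
    (m : Fin n) (hm : ∀ i, π i ≤ π m) (b : Fin n) (hb : m < π.symm b) :
    ¬ ∃ i j : Fin n, i < j ∧ j < m ∧ π j < b ∧ b < π i := by
  rintro ⟨i, j, hij, hjm, hjb, hbi⟩
  -- The entries `π i`, `π j`, `b` form a 413-pattern, so some entry `π l > π i` occurs
  -- to the right of `b`.
  obtain ⟨-, l, -, hl, -, -, hil⟩ := h i j (π.symm b) hij (hjm.trans hb) (by simpa) (by simpa)
  have hlm : π l < π m :=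
    lt_of_le_of_ne (hm l) (fun e => (hb.trans hl).ne' (π.injective e))
  -- The maximum, `b` and `π l` then form a 413-pattern whose first entry is the
  -- maximum, so no larger entry can complete it.
  obtain ⟨-, l', -, -, -, -, hl'⟩ := h m (π.symm b) l hb hl (by simpa using hbi.trans hil) hlm
  exact (hm l').not_gt hl'
end

section
/- For every k ≥ 1, the number of permutations π of [k] with π(k) = k that avoid the barred pattern 2̄4135̄ equals the number of permutations of [k−1] that avoid the barred pattern 2̄413. -/
/-- The permutation of [k + 1] obtained from a permutation of [k] by appending a new maximum. -/
def extendLast {k : ℕ} (σ : Equiv.Perm (Fin k)) : Equiv.Perm (Fin (k + 1)) :=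
  finSuccEquivLast.trans ((Equiv.optionCongr σ).trans finSuccEquivLast.symm)

@[simp] lemma extendLast_last {k : ℕ} (σ : Equiv.Perm (Fin k)) :
    extendLast σ (Fin.last k) = Fin.last k := by
  simp [extendLast]

@[simp] lemma extendLast_castSucc {k : ℕ} (σ : Equiv.Perm (Fin k)) (i : Fin k) :
    extendLast σ i.castSucc = (σ i).castSucc := by
  simp [extendLast]

lemma exists_extendLast_eq {k : ℕ} (π : Equiv.Perm (Fin (k + 1)))
    (hlast : π (Fin.last k) = Fin.last k) : ∃ σ : Equiv.Perm (Fin k), extendLast σ = π := by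
  have hne : ∀ i : Fin k, π i.castSucc ≠ Fin.last k := fun i h =>
    (Fin.castSucc_lt_last i).ne (π.injective (h.trans hlast.symm))
  have hinj : Function.Injective fun i : Fin k => (π i.castSucc).castPred (hne i) := by
    intro i j h
    exact Fin.castSucc_injective k (π.injective (Fin.castPred_inj.1 h))
  refine ⟨Equiv.ofBijective _ (Finite.injective_iff_bijective.1 hinj), Equiv.ext fun i => ?_⟩
  induction i using Fin.lastCases with
  | last => simp [hlast]
  | cast i => simp

/-- Appending a new maximum turns the 2̄413 condition into the 2̄4135̄ condition. -/
lemma avoids24135_extendLast_iff {k : ℕ} (σ : Equiv.Perm (Fin k)) :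
    Avoids24135 (extendLast σ) ↔ Avoids2413 σ := by
  constructor
  · intro H i j l hij hjl h1 h2
    obtain ⟨h, -, hhi, -, hjh, hhl, -⟩ :=
      H i.castSucc j.castSucc l.castSucc (by simpa) (by simpa) (by simpa) (by simpa)
    induction h using Fin.lastCases with
    | last => exact absurd hhi (Fin.castSucc_lt_last i).not_gt
    | cast h => exact ⟨h, by simpa using hhi, by simpa using hjh, by simpa using hhl⟩
  · intro H i j l hij hjl h1 h2
    -- The last position holds the maximum, so it cannot be the "3" of a 413-pattern.
    induction l using Fin.lastCases with
    | last =>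
      rw [extendLast_last] at h2
      exact absurd h2 (Fin.le_last _).not_gt
    | cast l =>
      obtain ⟨j, rfl⟩ := Fin.exists_castSucc_eq.2 (hjl.trans (Fin.castSucc_lt_last l)).ne
      obtain ⟨i, rfl⟩ := Fin.exists_castSucc_eq.2 (hij.trans (Fin.castSucc_lt_last j)).ne
      obtain ⟨h, hhi, hjh, hhl⟩ := H i j l (by simpa using hij) (by simpa using hjl)
        (by simpa using h1) (by simpa using h2)
      exact ⟨h.castSucc, Fin.last k, by simpa, Fin.castSucc_lt_last l, by simpa, by simpa,
        by simp [Fin.castSucc_lt_last]⟩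

/-- For every k ≥ 1 (written k+1), the number of 2̄4135̄-avoiding permutations of [k+1]
ending at their maximum equals the number of 2̄413-avoiding permutations of [k]. -/
theorem stmt7 (k : ℕ) :
    Nat.card {π : Equiv.Perm (Fin (k + 1)) // π (Fin.last k) = Fin.last k ∧ Avoids24135 π} =
      Nat.card {σ : Equiv.Perm (Fin k) // Avoids2413 σ} := by
  refine (Nat.card_eq_of_bijective
    (fun σ : {σ : Equiv.Perm (Fin k) // Avoids2413 σ} =>
      (⟨extendLast σ.1, extendLast_last σ.1, (avoids24135_extendLast_iff σ.1).2 σ.2⟩ :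
        {π : Equiv.Perm (Fin (k + 1)) // π (Fin.last k) = Fin.last k ∧ Avoids24135 π}))
    ⟨?_, ?_⟩).symm
  · intro σ τ h
    have h' : extendLast σ.1 = extendLast τ.1 := congrArg Subtype.val h
    refine Subtype.ext (Equiv.ext fun i => ?_)
    have := congrArg (fun π : Equiv.Perm (Fin (k + 1)) => π i.castSucc) h'
    simpa using this
  · rintro ⟨π, hlast, hπ⟩
    obtain ⟨σ, rfl⟩ := exists_extendLast_eq π hlast
    exact ⟨⟨σ, (avoids24135_extendLast_iff σ).1 hπ⟩, rfl⟩
end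

section
/- Let π be a permutation of [n] and let m be the position of the maximum entry n. Suppose that: (1) the entries after position m are strictly decreasing; (2) whenever i < j < m with π(i) > π(j), every value b with π(j) ≤ b ≤ π(i) occurs at a position before m; and (3) for every maximal interval of integers I ⊆ [n−1] all of whose values occur before position m (maximal among intervals of values occurring entirely before m), the subsequence of π consisting of the entries with values in I avoids the barred pattern 2̄413 (after standardizing, i.e., as a pattern). Then π avoids the barred pattern 2̄4135̄. -/
/-- The subsequence of π consisting of entries with values in S avoids the barred
pattern 2̄413 (stated directly on relative order, which is what standardization
preserves). -/
def AvoidsIn2413 {n : ℕ} (π : Equiv.Perm (Fin n)) (S : Set (Fin n)) : Prop :=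
  ∀ i j k : Fin n, π i ∈ S → π j ∈ S → π k ∈ S → i < j → j < k →
    π j < π k → π k < π i →
      ∃ h : Fin n, π h ∈ S ∧ h < i ∧ π j < π h ∧ π h < π k

/-- Sufficiency of the decomposition: conditions (1)–(3) imply 2̄4135̄-avoidance. -/
theorem stmt8 {n : ℕ} (π : Equiv.Perm (Fin n)) (m : Fin n) (hm : ∀ i, π i ≤ π m)
    (h1 : ∀ i j : Fin n, m < i → i < j → π j < π i)
    (h2 : ∀ i j : Fin n, i < j → j < m → π j < π i →
      ∀ b : Fin n, π j ≤ b → b ≤ π i → π.symm b < m)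
    (h3 : ∀ I : Set (Fin n), I.OrdConnected → (∀ v ∈ I, π.symm v < m) →
      (∀ J : Set (Fin n), J.OrdConnected → (∀ v ∈ J, π.symm v < m) → I ⊆ J → J = I) →
      AvoidsIn2413 π I) :
    Avoids24135 π := by
  intro i j k hij hjk hlt hki
  -- Positions from `m` on hold `n` followed by decreasing entries, so they contain no ascent.
  have hjm : j < m := by
    by_contra hc
    rcases (not_lt.mp hc).eq_or_lt with rfl | hmj
    · exact absurd (hm k) (not_le.mpr hlt)
    · exact lt_asymm hlt (h1 j k hmj hjk)
  have hbetween := h2 i j hij hjm (hlt.trans hki)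
  have hkm : k < m := by simpa using hbetween (π k) hlt.le hki.le
  have him : π i < π m := lt_of_le_of_ne (hm i) fun h => (hij.trans hjm).ne (π.injective h)
  let S : Set (Fin n) := {v | π.symm v < m}
  have hmem : ∀ v, π j ≤ v → v ≤ π i → v ∈ S.ordConnectedComponent (π j) := by
    intro v hjv hvi
    rw [Set.mem_ordConnectedComponent, Set.uIcc_of_le hjv]
    exact fun b hb => hbetween b hb.1 (hb.2.trans hvi)
  have hj : π j ∈ S.ordConnectedComponent (π j) := hmem _ le_rfl (hlt.trans hki).le
  obtain ⟨h, -, hhi, hjh, hhk⟩ := h3 (S.ordConnectedComponent (π j)) inferInstance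
    (fun v hv => Set.ordConnectedComponent_subset (s := S) hv)
    (fun J hJ hJS hIJ => (Set.subset_ordConnectedComponent (h := hJ) (hIJ hj)
      (t := S) hJS).antisymm hIJ)
    i j k (hmem _ (hlt.trans hki).le le_rfl) hj (hmem _ hlt.le hki.le) hij hjk hlt hki
  exact ⟨h, m, hhi, hkm, hjh, hhk, him⟩
end

section
/- Let π be a permutation of [n] and let m be the position of the maximum entry n. Then π avoids the barred pattern 2̄4135̄ if and only if all three of the following hold: (1) the entries after position m are strictly decreasing; (2) whenever i < j < m with π(i) > π(j), every value b with π(j) ≤ b ≤ π(i) occurs at a position before m; and (3) for every maximal interval of integers I ⊆ [n−1] all of whose values occur before position m, the subsequence of π consisting of the entries with values in I, after standardizing, avoids the barred pattern 2̄413. -/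
/-- The maximal interval of values containing `a` all of whose members occur before position `m`
(empty if `a` itself does not): those `v` such that every value between `a` and `v`
occurs before `m`. -/
def valueBlock {n : ℕ} (π : Equiv.Perm (Fin n)) (m a : Fin n) : Set (Fin n) :=
  {v | ∀ b ∈ Set.uIcc a v, π.symm b < m}

lemma valueBlock_ordConnected {n : ℕ} (π : Equiv.Perm (Fin n)) (m a : Fin n) :
    (valueBlock π m a).OrdConnected := by
  refine ⟨fun x hx y hy z hz b hb => ?_⟩
  rw [Set.mem_uIcc] at hb
  -- A value between `a` and `z` is between `a` and one of the endpoints `x`, `y`.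
  rcases hb with hb | hb
  · exact hy b (Set.mem_uIcc.2 (Or.inl ⟨hb.1, hb.2.trans hz.2⟩))
  · exact hx b (Set.mem_uIcc.2 (Or.inr ⟨hz.1.trans hb.1, hb.2⟩))

lemma valueBlock_maximal {n : ℕ} (π : Equiv.Perm (Fin n)) (m a : Fin n)
    (ha : π.symm a < m) (J : Set (Fin n)) (hJ : J.OrdConnected)
    (hJm : ∀ v ∈ J, π.symm v < m) (hIJ : valueBlock π m a ⊆ J) : J = valueBlock π m a := by
  refine Set.Subset.antisymm (fun v hv b hb => hJm b ?_) hIJ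
  have haJ : a ∈ J := hIJ fun b hb => by
    rw [Set.uIcc_self, Set.mem_singleton_iff] at hb
    exact hb ▸ ha
  exact hJ.uIcc_subset haJ hv hb

/-- Characterization: π avoids 2̄4135̄ iff conditions (1)–(3) hold. -/
theorem stmt9 {n : ℕ} (π : Equiv.Perm (Fin n)) (m : Fin n) (hm : ∀ i, π i ≤ π m) :
    Avoids24135 π ↔
      ((∀ i j : Fin n, m < i → i < j → π j < π i) ∧
       (∀ i j : Fin n, i < j → j < m → π j < π i →
          ∀ b : Fin n, π j ≤ b → b ≤ π i → π.symm b < m) ∧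
       (∀ I : Set (Fin n), I.OrdConnected → (∀ v ∈ I, π.symm v < m) →
          (∀ J : Set (Fin n), J.OrdConnected → (∀ v ∈ J, π.symm v < m) → I ⊆ J → J = I) →
          AvoidsIn2413 π I)) := by
  constructor
  · intro hA
    have h1 : ∀ i j : Fin n, m < i → i < j → π j < π i := by
      intro i j hmi hij
      by_contra! hle
      have hlt : π i < π j := lt_of_le_of_ne hle fun h => hij.ne (π.injective h)
      have hjm : π j < π m :=
        lt_of_le_of_ne (hm j) fun h => (hmi.trans hij).ne' (π.injective h)
      obtain ⟨_, l, _, _, _, _, hl⟩ := hA m i j hmi hij hlt hjm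
      exact absurd hl (hm l).not_gt
    refine ⟨h1, ?_, ?_⟩
    · intro i j hij hjm hji b hjb hbi
      obtain ⟨k, rfl⟩ := π.surjective b
      rw [Equiv.symm_apply_apply]
      by_contra! hmk
      have hjk : j < k := hjm.trans_le hmk
      have h3 : π j < π k := lt_of_le_of_ne hjb fun h => hjk.ne (π.injective h)
      have h4 : π k < π i :=
        lt_of_le_of_ne hbi fun h => (hij.trans hjk).ne' (π.injective h)
      have hmk' : m < k := lt_of_le_of_ne hmk fun h => by
        subst h
        exact absurd h4 (hm i).not_gt
      obtain ⟨_, l, _, hkl, _, _, hl⟩ := hA i j k hij hjk h3 h4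
      exact absurd (hl.trans (h1 k l hmk' hkl)) h4.not_gt
    · intro I hI _ _ i j k _ hj hk hij hjk h3 h4
      obtain ⟨h, _, hhi, _, h5, h6, _⟩ := hA i j k hij hjk h3 h4
      exact ⟨h, hI.out hj hk ⟨h5.le, h6.le⟩, hhi, h5, h6⟩
  · rintro ⟨h1, h2, h3⟩ i j k hij hjk hvjk hvki
    have hjm : j < m := by
      by_contra! hmj
      rcases hmj.eq_or_lt with rfl | hmj
      · exact absurd hvjk (hm k).not_gt
      · exact absurd hvjk (h1 j k hmj hjk).not_gt
    have hbefore := h2 i j hij hjm (hvjk.trans hvki)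
    have hkm : k < m := by simpa using hbefore (π k) hvjk.le hvki.le
    have hmem : ∀ v, π j ≤ v → v ≤ π i → v ∈ valueBlock π m (π j) := by
      intro v hv1 hv2 b hb
      rw [Set.uIcc_of_le hv1] at hb
      exact hbefore b hb.1 (hb.2.trans hv2)
    obtain ⟨h, _, hhi, h5, h6⟩ := h3 (valueBlock π m (π j)) (valueBlock_ordConnected π m _)
      (fun v hv => hv v Set.right_mem_uIcc)
      (valueBlock_maximal π m _ (by simpa using hjm)) i j k
      (hmem _ (hvjk.trans hvki).le le_rfl) (hmem _ le_rfl (hvjk.trans hvki).le)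
      (hmem _ hvjk.le hvki.le) hij hjk hvjk hvki
    exact ⟨h, m, hhi, hkm, h5, h6,
      lt_of_le_of_ne (hm i) fun e => (hij.trans hjm).ne (π.injective e)⟩
end

section
/- Let π be a permutation of [n] avoiding the barred pattern 2̄4135̄, let m be the position of the maximum entry n, and let I, J ⊆ [n−1] be two distinct maximal intervals of values occurring entirely before position m with max I < min J. Then every entry of π with value in I occurs at an earlier position than every entry of π with value in J (the value-blocks before n occur in increasing order of value). -/
/-- In a 2̄4135̄-avoiding permutation, the value-blocks before the maximum occur in
increasing order of value: if I, J are distinct maximal value-intervals occurring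
entirely before the maximum, with all of I below all of J, then every entry with
value in I precedes every entry with value in J. -/
theorem stmt10 {n : ℕ} (π : Equiv.Perm (Fin n)) (h : Avoids24135 π)
    (m : Fin n) (hm : ∀ i, π i ≤ π m)
    (I J : Set (Fin n))
    (hI : I.OrdConnected) (hIbefore : ∀ v ∈ I, π.symm v < m)
    (hImax : ∀ K : Set (Fin n), K.OrdConnected → (∀ v ∈ K, π.symm v < m) → I ⊆ K → K = I)
    (hJ : J.OrdConnected) (hJbefore : ∀ v ∈ J, π.symm v < m)
    (hJmax : ∀ K : Set (Fin n), K.OrdConnected → (∀ v ∈ K, π.symm v < m) → J ⊆ K → K = J)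
    (hIne : I.Nonempty) (hJne : J.Nonempty) (hne : I ≠ J)
    (hlt : ∀ a ∈ I, ∀ b ∈ J, a < b) :
    ∀ p q : Fin n, π p ∈ I → π q ∈ J → p < q := by
  intro p q hp hq
  by_contra hpq
  have hab : π p < π q := hlt _ hp _ hq
  have hqp : q < p := lt_of_le_of_ne (not_lt.mp hpq) (fun e => by simp [e] at hab)
  have hpm : p < m := by simpa using hIbefore _ hp
  obtain ⟨c, hac, hcb, hmc⟩ : ∃ c, π p ≤ c ∧ c ≤ π q ∧ m ≤ π.symm c := by
    by_contra! hall
    have hK := hImax (I ∪ Set.Icc (π p) (π q)) ?_ ?_ Set.subset_union_left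
    · have hqI : π q ∈ I := by
        rw [← hK]
        exact Or.inr ⟨hab.le, le_rfl⟩
      exact lt_irrefl _ (hlt _ hqI _ hq)
    · refine ⟨fun x hx y hy z hz => ?_⟩
      rcases le_total z (π p) with hza | hza
      · rcases hx with hx | hx
        · exact Or.inl (hI.out hx hp ⟨hz.1, hza⟩)
        · exact Or.inr ⟨hx.1.trans hz.1, hza.trans hab.le⟩
      · rcases hy with hy | hy
        · exact Or.inl (hI.out hp hy ⟨hza, hz.2⟩)
        · exact Or.inr ⟨hza, hz.2.trans hy.2⟩
    · rintro v (hv | hv)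
      · exact hIbefore v hv
      · exact hall v hv.1 hv.2
  obtain ⟨k, rfl⟩ := π.surjective c
  rw [Equiv.symm_apply_apply] at hmc
  have hpk : p < k := hpm.trans_le hmc
  have hac' : π p < π k := lt_of_le_of_ne hac (fun e => hpk.ne (π.injective e))
  have hcb' : π k < π q :=
    lt_of_le_of_ne hcb (fun e => (hqp.trans hpk).ne (π.injective e).symm)
  have hmk : m < k := lt_of_le_of_ne hmc (fun e => by
    subst e
    exact absurd (hm q) (not_le.mpr hcb'))
  obtain ⟨-, l, -, hkl, -, -, hbl⟩ := h q p k hqp hpk hac' hcb'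
  have hlm : π l < π m :=
    lt_of_le_of_ne (hm l) (fun e => (hmk.trans hkl).ne (π.injective e).symm)
  obtain ⟨-, l', -, -, -, -, hl'⟩ := h m k l hmk hkl (hcb'.trans hbl) hlm
  exact absurd (hm l') (not_le.mpr hl')
end
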